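/- arXiv:math/0107120 — 5 statements merged into one kernel-verified Lean document; each statement's English description precedes it below -/
import Mathlib

section
/- Let (Ω, F, P) be a probability space, let G ⊆ F be a sub-σ-field, and let d, e be integrable real-valued random variables. Then the following are equivalent: (i) for every bounded nonnegative G-measurable random variable s, E[max(s, |e|)] ≤ E[max(s, |d|)]; (ii) for every real number λ ≥ 0, E[max(λ, |e|) | G] ≤ E[max(λ, |d|) | G] almost surely. -/
open MeasureTheory

/-!
Both conditions are compared with the localized inequality
`∫_A max(λ, |e|) ≤ ∫_A max(λ, |d|)` for all `A ∈ G` and `λ ≥ 0`, which is the integrated form of (ii)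
(`condExp_le_condExp_iff`).

For (i) ⇒ (ii), test (i) with `s = λ` on `A` and `s = n` off `A`. Since `max(n, |e|) ≥ n`, this gives
`∫_A max(λ, |e|) ≤ ∫_A max(λ, |d|) + ∫_{Aᶜ} (max(n, |d|) - n)`, and the error term tends to `0` by
dominated convergence (`tendsto_setIntegral_max_sub`).

For (ii) ⇒ (i), the localized inequality summed over the level sets of a `G`-measurable `s` with
countably many values gives (i) for such `s` (`integral_max_natCast_mul_le`). A general `s` is
within `δ` above its discretization `⌊s / δ⌋ δ`, and `s ↦ max(s, x)` is monotone and `1`-Lipschitz,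
so (i) holds for `s` up to an error `δ`, for every `δ > 0`.
-/

/-- An almost sure inequality between conditional expectations is tested by integrating the
original functions over the sets of the sub-σ-field. -/
lemma condExp_le_condExp_iff {Ω : Type*} {m0 : MeasurableSpace Ω} {P : Measure Ω}
    [IsFiniteMeasure P] {G : MeasurableSpace Ω} (hG : G ≤ m0) {f g : Ω → ℝ}
    (hf : Integrable f P) (hg : Integrable g P) :
    P[f | G] ≤ᵐ[P] P[g | G] ↔
      ∀ A, MeasurableSet[G] A → ∫ ω in A, f ω ∂P ≤ ∫ ω in A, g ω ∂P := by
  constructor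
  · intro h A hA
    rw [← setIntegral_condExp hG hf hA, ← setIntegral_condExp hG hg hA]
    exact setIntegral_mono_ae integrable_condExp.integrableOn integrable_condExp.integrableOn h
  · intro h
    -- On the trimmed measure only sets of `G` have to be tested.
    refine ae_le_of_ae_le_trim (hm := hG) (ae_le_of_forall_setIntegral_le
      (integrable_condExp.trim hG stronglyMeasurable_condExp)
      (integrable_condExp.trim hG stronglyMeasurable_condExp) fun A hA _ => ?_)
    rw [← setIntegral_trim hG stronglyMeasurable_condExp hA,
      ← setIntegral_trim hG stronglyMeasurable_condExp hA,
      setIntegral_condExp hG hf hA, setIntegral_condExp hG hg hA]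
    exact h A hA

lemma integrable_max_abs {Ω : Type*} {m0 : MeasurableSpace Ω} {P : Measure Ω}
    {s f : Ω → ℝ} (hs : Integrable s P) (hf : Integrable f P) :
    Integrable (fun ω => max (s ω) |f ω|) P :=
  hs.sup hf.abs

lemma tendsto_setIntegral_max_sub {Ω : Type*} {m0 : MeasurableSpace Ω} {P : Measure Ω}
    [IsFiniteMeasure P] {d : Ω → ℝ} (hd : Integrable d P) (A : Set Ω) :
    Filter.Tendsto (fun n : ℕ => ∫ ω in A, (max (n : ℝ) |d ω| - n) ∂P) Filter.atTop (nhds 0) := by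
  have key := tendsto_integral_of_dominated_convergence (μ := P.restrict A)
    (F := fun (n : ℕ) ω => max (n : ℝ) |d ω| - n) (f := fun _ => (0 : ℝ)) (fun ω => |d ω|)
    (fun n => (((integrable_max_abs (integrable_const _) hd).sub
      (integrable_const _)).aestronglyMeasurable).restrict)
    hd.abs.restrict
    (fun n => Filter.Eventually.of_forall fun ω => by
      have hn : (0 : ℝ) ≤ n := Nat.cast_nonneg n
      rw [Real.norm_eq_abs, abs_of_nonneg (sub_nonneg.2 (le_max_left _ _)), sub_le_iff_le_add]
      exact max_le (by linarith [abs_nonneg (d ω)]) (by linarith))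
    (Filter.Eventually.of_forall fun ω => by
      refine tendsto_const_nhds.congr' ?_
      filter_upwards [Filter.eventually_ge_atTop ⌈|d ω|⌉₊] with n hn
      rw [max_eq_left (Nat.ceil_le.1 hn), sub_self])
  simpa using key

/-- Condition (i) for the discrete levels `s = k δ` with `k` an `ℕ`-valued `G`-measurable
function, from the localized inequality on each level set of `k`. -/
lemma integral_max_natCast_mul_le {Ω : Type*} {m0 : MeasurableSpace Ω} {P : Measure Ω}
    {G : MeasurableSpace Ω} (hG : G ≤ m0) {d e : Ω → ℝ}
    (hd : Integrable d P) (he : Integrable e P)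
    (h : ∀ lam : ℝ, 0 ≤ lam → ∀ A, MeasurableSet[G] A →
      ∫ ω in A, max lam |e ω| ∂P ≤ ∫ ω in A, max lam |d ω| ∂P)
    {k : Ω → ℕ} (hk : Measurable[G] k) {δ : ℝ} (hδ : 0 ≤ δ)
    (hint : Integrable (fun ω => (k ω : ℝ) * δ) P) :
    ∫ ω, max (k ω * δ) |e ω| ∂P ≤ ∫ ω, max (k ω * δ) |d ω| ∂P := by
  have hA : ∀ j, MeasurableSet[G] (k ⁻¹' {j}) := fun j => hk (measurableSet_singleton j)
  have hU : ⋃ j, k ⁻¹' {j} = Set.univ := by ext; simp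
  have hsum : ∀ f : Ω → ℝ, Integrable f P →
      HasSum (fun j : ℕ => ∫ ω in k ⁻¹' {j}, max (j * δ) |f ω| ∂P)
        (∫ ω, max (k ω * δ) |f ω| ∂P) := by
    intro f hf
    have H := hasSum_integral_iUnion (μ := P) (f := fun ω => max (k ω * δ) |f ω|)
      (fun j => hG _ (hA j)) (pairwise_disjoint_fiber k)
      (integrable_max_abs hint hf).integrableOn
    rw [hU, setIntegral_univ] at H
    refine (congrArg (HasSum · _) (funext fun j => ?_)).mpr H
    refine setIntegral_congr_fun (hG _ (hA j)) fun ω hω => ?_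
    rw [Set.mem_preimage, Set.mem_singleton_iff] at hω
    simp only [hω]
  exact hasSum_le (fun j => h _ (by positivity) _ (hA j)) (hsum e he) (hsum d hd)

/-- **Remark 1.**  For integrable random variables `d, e` and a sub-σ-field `G`, the condition
`E[max s |e|] ≤ E[max s |d|]` for all bounded nonnegative `G`-measurable `s` is equivalent to
`E[max λ |e| | G] ≤ E[max λ |d| | G]` a.s. for all `λ ≥ 0`. -/
theorem max_integral_le_iff_condexp_le
    (Ω : Type) (m0 : MeasurableSpace Ω) (P : Measure Ω) [IsProbabilityMeasure P]
    (G : MeasurableSpace Ω) (hG : G ≤ m0)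
    (d e : Ω → ℝ) (hd : Integrable d P) (he : Integrable e P) :
    (∀ s : Ω → ℝ, Measurable[G] s → (∀ ω, 0 ≤ s ω) → (∃ C : ℝ, ∀ ω, s ω ≤ C) →
        ∫ ω, max (s ω) |e ω| ∂P ≤ ∫ ω, max (s ω) |d ω| ∂P) ↔
      (∀ lam : ℝ, 0 ≤ lam →
        P[fun ω => max lam |e ω| | G] ≤ᵐ[P] P[fun ω => max lam |d ω| | G]) := by
  have hint : ∀ (c : ℝ) (f : Ω → ℝ), Integrable f P → Integrable (fun ω => max c |f ω|) P :=
    fun c f hf => integrable_max_abs (integrable_const c) hf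
  constructor
  · intro h lam hlam
    rw [condExp_le_condExp_iff hG (hint lam e he) (hint lam d hd)]
    intro A hA
    have bound : ∀ n : ℕ, ∫ ω in A, max lam |e ω| ∂P ≤
        ∫ ω in A, max lam |d ω| ∂P + ∫ ω in Aᶜ, (max (n : ℝ) |d ω| - n) ∂P := by
      intro n
      classical
      set s : Ω → ℝ := A.piecewise (fun _ => lam) (fun _ => (n : ℝ)) with hs
      have hsm : Measurable[G] s := Measurable.piecewise hA measurable_const measurable_const
      have hs0 : ∀ ω, 0 ≤ s ω := fun ω => by
        by_cases hω : ω ∈ A <;> simp [hs, hω, hlam]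
      have hsC : ∀ ω, s ω ≤ max lam n := fun ω => by
        by_cases hω : ω ∈ A <;> simp [hs, hω]
      have hsi : Integrable s P := Integrable.of_bound (hsm.mono hG le_rfl).aestronglyMeasurable
        (max lam n) (Filter.Eventually.of_forall fun ω => by
          rw [Real.norm_eq_abs, abs_of_nonneg (hs0 ω)]; exact hsC ω)
      have hsplit : ∀ f : Ω → ℝ, Integrable f P → ∫ ω, max (s ω) |f ω| ∂P =
          ∫ ω in A, max lam |f ω| ∂P + ∫ ω in Aᶜ, max (n : ℝ) |f ω| ∂P := by
        intro f hf
        rw [← integral_add_compl (hG _ hA) (integrable_max_abs hsi hf)]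
        congr 1
        · exact setIntegral_congr_fun (hG _ hA) fun ω hω => by
            simp [hs, Set.piecewise_eq_of_mem _ _ _ hω]
        · exact setIntegral_congr_fun (hG _ hA).compl fun ω hω => by
            simp [hs, Set.piecewise_eq_of_notMem _ _ _ hω]
      have H := h s hsm hs0 ⟨_, hsC⟩
      rw [hsplit e he, hsplit d hd] at H
      have h1 : ∫ ω in Aᶜ, (n : ℝ) ∂P ≤ ∫ ω in Aᶜ, max (n : ℝ) |e ω| ∂P :=
        integral_mono (integrable_const _) (hint n e he).restrict fun ω => le_max_left _ _
      rw [integral_sub (hint n d hd).restrict (integrable_const _)]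
      linarith
    have lim := (tendsto_setIntegral_max_sub hd Aᶜ).const_add (∫ ω in A, max lam |d ω| ∂P)
    rw [add_zero] at lim
    exact ge_of_tendsto' lim bound
  · intro h s hsm hs0 ⟨C, hC⟩
    have hloc : ∀ lam : ℝ, 0 ≤ lam → ∀ A, MeasurableSet[G] A →
        ∫ ω in A, max lam |e ω| ∂P ≤ ∫ ω in A, max lam |d ω| ∂P := fun lam hlam =>
      (condExp_le_condExp_iff hG (hint lam e he) (hint lam d hd)).1 (h lam hlam)
    have hsi : Integrable s P := Integrable.of_bound (hsm.mono hG le_rfl).aestronglyMeasurable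
      C (Filter.Eventually.of_forall fun ω => by
        rw [Real.norm_eq_abs, abs_of_nonneg (hs0 ω)]; exact hC ω)
    refine le_of_forall_pos_le_add fun δ hδ => ?_
    set k : Ω → ℕ := fun ω => ⌊s ω / δ⌋₊ with hkdef
    have hk : Measurable[G] k := Nat.measurable_floor.comp (hsm.div_const δ)
    have hle : ∀ ω, (k ω : ℝ) * δ ≤ s ω := fun ω =>
      (le_div_iff₀ hδ).1 (Nat.floor_le (div_nonneg (hs0 ω) hδ.le))
    have hge : ∀ ω, s ω ≤ k ω * δ + δ := fun ω => by
      have := (div_lt_iff₀ hδ).1 (Nat.lt_floor_add_one (s ω / δ))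
      linarith
    have hki : Integrable (fun ω => (k ω : ℝ) * δ) P := by
      have hkm : Measurable[m0] fun ω => (k ω : ℝ) * δ :=
        ((measurable_from_nat (f := fun j : ℕ => (j : ℝ))).comp (hk.mono hG le_rfl)).mul_const δ
      refine hsi.mono hkm.aestronglyMeasurable (Filter.Eventually.of_forall fun ω => ?_)
      rw [Real.norm_eq_abs, Real.norm_eq_abs, abs_of_nonneg (by positivity), abs_of_nonneg (hs0 ω)]
      exact hle ω
    calc ∫ ω, max (s ω) |e ω| ∂P
        ≤ ∫ ω, (max (k ω * δ) |e ω| + δ) ∂P :=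
          integral_mono (integrable_max_abs hsi he)
            ((integrable_max_abs hki he).add (integrable_const δ)) fun ω =>
            max_le ((hge ω).trans (by gcongr; exact le_max_left _ _))
              ((le_max_right (k ω * δ) _).trans (le_add_of_nonneg_right hδ.le))
      _ = ∫ ω, max (k ω * δ) |e ω| ∂P + δ := by
          rw [integral_add (integrable_max_abs hki he) (integrable_const δ)]; simp
      _ ≤ ∫ ω, max (k ω * δ) |d ω| ∂P + δ := by
          gcongr ?_ + δ
          exact integral_max_natCast_mul_le hG hd he hloc hk hδ.le hki
      _ ≤ ∫ ω, max (s ω) |d ω| ∂P + δ := by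
          gcongr ?_ + δ
          exact integral_mono (integrable_max_abs hki hd) (integrable_max_abs hsi hd) fun ω =>
            max_le_max (hle ω) le_rfl
end

section
/- Let (Ω, F, P) be a probability space, let G ⊆ F be a sub-σ-field, and let d, e be integrable real-valued random variables. If for all λ ≥ 0 and all A ∈ G one has P({|e| > λ} ∩ A) ≤ P({|d| > λ} ∩ A) (equivalently, P(|e| > λ | G) ≤ P(|d| > λ | G) almost surely for all λ ≥ 0), then for every λ ≥ 0, E[max(λ, |e|) | G] ≤ E[max(λ, |d|) | G] almost surely. -/
open MeasureTheory

/-!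
The two conditional expectations are `G`-measurable, so it suffices to compare the integrals of
`max λ |e|` and `max λ |d|` over each `A ∈ G` (`condExp_mono_of_setIntegral_le`). By the layer-cake
formula (`setIntegral_max_abs_le`) these are `∫₀^∞ P({max λ |·| > t} ∩ A) dt`. For `t < λ` both
integrands equal `P A`, and for `t ≥ λ` they are `P({|·| > t} ∩ A)`, which strong domination
compares.
-/

/-- Integrals over sets of the sub-σ-field determine the order of conditional expectations. -/
lemma condExp_mono_of_setIntegral_le {Ω : Type*} {m0 : MeasurableSpace Ω} {P : Measure Ω}
    [IsFiniteMeasure P] {G : MeasurableSpace Ω} (hG : G ≤ m0) {f g : Ω → ℝ}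
    (hf : Integrable f P) (hg : Integrable g P)
    (h : ∀ A, MeasurableSet[G] A → ∫ ω in A, f ω ∂P ≤ ∫ ω in A, g ω ∂P) :
    P[f | G] ≤ᵐ[P] P[g | G] := by
  -- Working with `P.trim hG` restricts the test sets to those of `G`.
  refine ae_le_of_ae_le_trim (hm := hG) ?_
  refine ae_le_of_forall_setIntegral_le
    (integrable_condExp.trim hG stronglyMeasurable_condExp)
    (integrable_condExp.trim hG stronglyMeasurable_condExp) fun A hA _ => ?_
  rw [← setIntegral_trim hG stronglyMeasurable_condExp hA,
    ← setIntegral_trim hG stronglyMeasurable_condExp hA,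
    setIntegral_condExp hG hf hA, setIntegral_condExp hG hg hA]
  exact h A hA

/-- Layer-cake comparison on a fixed set `A`: tail domination above level `lam ≥ 0` is enough, since
below that level the tails of `max lam |e|` and `max lam |d|` coincide. -/
lemma setIntegral_max_abs_le {Ω : Type*} {m0 : MeasurableSpace Ω} {P : Measure Ω}
    {d e : Ω → ℝ} {lam : ℝ} (hlam : 0 ≤ lam) {A : Set Ω} (hA : MeasurableSet A)
    (hd : Integrable (fun ω => max lam |d ω|) P) (he : Integrable (fun ω => max lam |e ω|) P)
    (hdom : ∀ t : ℝ, lam ≤ t → P ({ω | t < |e ω|} ∩ A) ≤ P ({ω | t < |d ω|} ∩ A)) :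
    ∫ ω in A, max lam |e ω| ∂P ≤ ∫ ω in A, max lam |d ω| ∂P := by
  have hnn : ∀ f : Ω → ℝ, ∀ ω, 0 ≤ max lam |f ω| := fun f ω => le_max_of_le_left hlam
  have hd' := hd.restrict (s := A)
  have he' := he.restrict (s := A)
  rw [integral_eq_lintegral_of_nonneg_ae (.of_forall (hnn e)) he'.aestronglyMeasurable,
    integral_eq_lintegral_of_nonneg_ae (.of_forall (hnn d)) hd'.aestronglyMeasurable]
  refine ENNReal.toReal_mono hd'.lintegral_lt_top.ne ?_
  rw [lintegral_eq_lintegral_meas_lt _ (.of_forall (hnn e)) he'.aemeasurable,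
    lintegral_eq_lintegral_meas_lt _ (.of_forall (hnn d)) hd'.aemeasurable]
  refine lintegral_mono fun t => ?_
  simp only [Measure.restrict_apply' hA, lt_max_iff]
  by_cases ht : t < lam
  · simp [ht]
  · simpa [ht] using hdom t (not_lt.1 ht)

/-- **Remark 2.**  If `P({|e| > λ} ∩ A) ≤ P({|d| > λ} ∩ A)` for all `λ ≥ 0` and all `A ∈ G`
(strong domination), then `E[max λ |e| | G] ≤ E[max λ |d| | G]` a.s. for every `λ ≥ 0`. -/
theorem condexp_max_le_of_strong_domination
    (Ω : Type) (m0 : MeasurableSpace Ω) (P : Measure Ω) [IsProbabilityMeasure P]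
    (G : MeasurableSpace Ω) (hG : G ≤ m0)
    (d e : Ω → ℝ) (hd : Integrable d P) (he : Integrable e P)
    (hdom : ∀ lam : ℝ, 0 ≤ lam → ∀ A : Set Ω, MeasurableSet[G] A →
      P ({ω | lam < |e ω|} ∩ A) ≤ P ({ω | lam < |d ω|} ∩ A)) :
    ∀ lam : ℝ, 0 ≤ lam →
      P[fun ω => max lam |e ω| | G] ≤ᵐ[P] P[fun ω => max lam |d ω| | G] := by
  intro lam hlam
  have hmax : ∀ f : Ω → ℝ, Integrable f P → Integrable (fun ω => max lam |f ω|) P :=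
    fun f hf => (integrable_const lam).sup hf.abs
  refine condExp_mono_of_setIntegral_le hG (hmax e he) (hmax d hd) fun A hA => ?_
  exact setIntegral_max_abs_le hlam (hG A hA) (hmax d hd) (hmax e he)
    fun t ht => hdom t (hlam.trans ht) A hA
end

section
/- If M is an n×n sub-doubly stochastic matrix, then there exists an n×n sub-doubly stochastic matrix N such that M + N is doubly stochastic. -/
/-!
Let `r i = 1 - ∑ j, M i j` and `c j = 1 - ∑ i, M i j` be the row and column deficits of `M`. They
are nonnegative and both sum to the same total `s = n - ∑ i, ∑ j, M i j`. The rank-one matrix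
`N i j = r i * c j / s` therefore has row sums `r` and column sums `c`, which is exactly what is
missing from `M`. When `s = 0` all deficits vanish, and the convention `x / 0 = 0` makes `N = 0`.
-/

/-- The rank-one matrix `r i * c j / s` has row sums `r` when `c` sums to `s = ∑ i, r i`; this
includes the case `s = 0`, in which `r = 0`. -/
lemma sum_mul_div_total {ι κ : Type*} [Fintype ι] [Fintype κ] {r : ι → ℝ} {c : κ → ℝ}
    (hr : ∀ i, 0 ≤ r i) (h : ∑ j, c j = ∑ i, r i) (i : ι) :
    ∑ j, r i * c j / ∑ k, r k = r i := by
  rw [← Finset.sum_div, ← Finset.mul_sum, h]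
  refine mul_div_cancel_of_imp fun hs => ?_
  exact (Finset.sum_eq_zero_iff_of_nonneg fun k _ => hr k).1 hs i (Finset.mem_univ i)

/-- **Lemma 6.**  For any sub-doubly stochastic matrix `M` there is a sub-doubly stochastic
matrix `N` with `M + N` doubly stochastic. -/
theorem subDoublyStochastic_add_doublyStochastic (n : ℕ)
    (M : Matrix (Fin n) (Fin n) ℝ)
    (hnonneg : ∀ i j, 0 ≤ M i j)
    (hrow : ∀ i, ∑ j, M i j ≤ 1)
    (hcol : ∀ j, ∑ i, M i j ≤ 1) :
    ∃ N : Matrix (Fin n) (Fin n) ℝ,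
      (∀ i j, 0 ≤ N i j) ∧
      (∀ i, ∑ j, N i j ≤ 1) ∧
      (∀ j, ∑ i, N i j ≤ 1) ∧
      (∀ i, ∑ j, (M + N) i j = 1) ∧
      (∀ j, ∑ i, (M + N) i j = 1) := by
  set r : Fin n → ℝ := fun i => 1 - ∑ j, M i j with hr
  set c : Fin n → ℝ := fun j => 1 - ∑ i, M i j with hc
  have hr0 : ∀ i, 0 ≤ r i := fun i => sub_nonneg.2 (hrow i)
  have hc0 : ∀ j, 0 ≤ c j := fun j => sub_nonneg.2 (hcol j)
  have hrc : ∑ j, c j = ∑ i, r i := by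
    simp only [hr, hc, Finset.sum_sub_distrib]
    rw [Finset.sum_comm]
  have hNrow : ∀ i, ∑ j, r i * c j / ∑ k, r k = r i := sum_mul_div_total hr0 hrc
  have hNcol : ∀ j, ∑ i, r i * c j / ∑ k, r k = c j := fun j => by
    simpa only [mul_comm, hrc] using sum_mul_div_total hc0 hrc.symm j
  refine ⟨Matrix.of fun i j => r i * c j / ∑ k, r k, fun i j => ?_, fun i => ?_, fun j => ?_,
    fun i => ?_, fun j => ?_⟩
  · exact div_nonneg (mul_nonneg (hr0 i) (hc0 j)) (Finset.sum_nonneg fun k _ => hr0 k)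
  · simp only [Matrix.of_apply, hNrow]
    exact sub_le_self _ (Finset.sum_nonneg fun j _ => hnonneg i j)
  · simp only [Matrix.of_apply, hNcol]
    exact sub_le_self _ (Finset.sum_nonneg fun i _ => hnonneg i j)
  · simp only [Matrix.add_apply, Matrix.of_apply, Finset.sum_add_distrib, hNrow]
    exact add_sub_cancel _ _
  · simp only [Matrix.add_apply, Matrix.of_apply, Finset.sum_add_distrib, hNcol]
    exact add_sub_cancel _ _
end

section
/- Let M be an n×n real matrix such that every row sum and every column sum of M is 0, and such that the entrywise absolute value matrix |M| = [|m_{ij}|] is sub-doubly stochastic. Then there exist a positive integer S, n×n permutation matrices P_1,…,P_S, and real numbers θ_1,…,θ_S with Σ_{i=1}^S θ_i = 0 and Σ_{i=1}^S |θ_i| = 1, such that M = Σ_{i=1}^S θ_i P_i. -/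
/-!
Since `|M|` is sub-doubly stochastic, it can be completed to a doubly stochastic matrix `|M| + C`
with `C ≥ 0`: the row deficits and column deficits of `|M|` are nonnegative and have the same total,
so a rank-one `C` works (`exists_nonneg_matrix_of_marginals`). Because the rows and columns of `M`
sum to `0`, both `|M| + M + C` and `|M| - M + C` are still doubly stochastic, and `M` is half their
difference. Birkhoff's theorem writes each of the two as a convex combination of permutation
matrices; the weights of the first, halved, and those of the second, halved and negated, are the
required coefficients `θ`.
-/

/-- Nonnegative row and column marginals with equal totals are realised by a nonnegative matrix,
namely the normalised outer product `u i * v j / ∑ i, u i`. -/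
lemma exists_nonneg_matrix_of_marginals {ι : Type*} [Fintype ι] (u v : ι → ℝ)
    (hu : ∀ i, 0 ≤ u i) (hv : ∀ j, 0 ≤ v j) (huv : ∑ i, u i = ∑ j, v j) :
    ∃ C : Matrix ι ι ℝ, (∀ i j, 0 ≤ C i j) ∧ (∀ i, ∑ j, C i j = u i) ∧
      ∀ j, ∑ i, C i j = v j := by
  refine ⟨Matrix.of fun i j => u i * v j / ∑ k, u k, fun i j => ?_, fun i => ?_, fun j => ?_⟩
  all_goals simp only [Matrix.of_apply]
  · exact div_nonneg (mul_nonneg (hu i) (hv j)) (Finset.sum_nonneg fun k _ => hu k)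
  -- When the common total is `0` all marginals vanish, so the value of the division is harmless.
  · rw [← Finset.sum_div, ← Finset.mul_sum, ← huv]
    refine mul_div_cancel_of_imp fun h => ?_
    exact (Finset.sum_eq_zero_iff_of_nonneg fun k _ => hu k).1 h i (Finset.mem_univ i)
  · rw [← Finset.sum_div, ← Finset.sum_mul, mul_comm]
    refine mul_div_cancel_of_imp fun h => ?_
    rw [huv] at h
    exact (Finset.sum_eq_zero_iff_of_nonneg fun k _ => hv k).1 h j (Finset.mem_univ j)

/-- **Lemma 7.**  If every row sum and column sum of `M` is `0` and the entrywise absolute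
value of `M` is sub-doubly stochastic, then `M = ∑ θ_i P_i` for permutation matrices `P_i`
and reals `θ_i` with `∑ θ_i = 0` and `∑ |θ_i| = 1`. -/
theorem signed_birkhoff_decomposition (n : ℕ)
    (M : Matrix (Fin n) (Fin n) ℝ)
    (hrow : ∀ i, ∑ j, M i j = 0)
    (hcol : ∀ j, ∑ i, M i j = 0)
    (habsrow : ∀ i, ∑ j, |M i j| ≤ 1)
    (habscol : ∀ j, ∑ i, |M i j| ≤ 1) :
    ∃ (S : ℕ) (θ : Fin S → ℝ) (σ : Fin S → Equiv.Perm (Fin n)),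
      0 < S ∧
      (∑ s, θ s = 0) ∧
      (∑ s, |θ s| = 1) ∧
      M = ∑ s, θ s • Matrix.of (fun i j => if σ s i = j then (1 : ℝ) else 0) := by
  obtain ⟨C, hC, hCrow, hCcol⟩ := exists_nonneg_matrix_of_marginals
    (fun i => 1 - ∑ j, |M i j|) (fun j => 1 - ∑ i, |M i j|)
    (fun i => sub_nonneg.2 (habsrow i)) (fun j => sub_nonneg.2 (habscol j))
    (by simp only [Finset.sum_sub_distrib]; rw [Finset.sum_comm])
  have hpos : Matrix.of (fun i j => |M i j| + M i j + C i j) ∈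
      doublyStochastic ℝ (Fin n) := by
    rw [mem_doublyStochastic_iff_sum]
    refine ⟨fun i j => ?_, fun i => ?_, fun j => ?_⟩
    · rw [Matrix.of_apply]
      linarith [hC i j, neg_abs_le (M i j)]
    · simp [Finset.sum_add_distrib, hrow, hCrow]
    · simp [Finset.sum_add_distrib, hcol, hCcol]
  have hneg : Matrix.of (fun i j => |M i j| - M i j + C i j) ∈
      doublyStochastic ℝ (Fin n) := by
    rw [mem_doublyStochastic_iff_sum]
    refine ⟨fun i j => ?_, fun i => ?_, fun j => ?_⟩
    · rw [Matrix.of_apply]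
      linarith [hC i j, le_abs_self (M i j)]
    · simp [Finset.sum_add_distrib, hrow, hCrow]
    · simp [Finset.sum_add_distrib, hcol, hCcol]
  obtain ⟨w, hw0, hw1, hw⟩ := exists_eq_sum_perm_of_mem_doublyStochastic hpos
  obtain ⟨v, hv0, hv1, hv⟩ := exists_eq_sum_perm_of_mem_doublyStochastic hneg
  let e := (Fintype.equivFin (Equiv.Perm (Fin n) ⊕ Equiv.Perm (Fin n))).symm
  let t : Equiv.Perm (Fin n) ⊕ Equiv.Perm (Fin n) → ℝ :=
    Sum.elim (fun σ => w σ / 2) (fun σ => -(v σ / 2))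
  let p : Equiv.Perm (Fin n) ⊕ Equiv.Perm (Fin n) → Equiv.Perm (Fin n) := Sum.elim id id
  refine ⟨_, fun s => t (e s), fun s => p (e s), Fintype.card_pos, ?_, ?_, ?_⟩
  · rw [e.sum_comp t]
    simp [t, Fintype.sum_sum_type, ← Finset.sum_div, hw1, hv1]
  · rw [e.sum_comp fun x => |t x|]
    simp [t, Fintype.sum_sum_type, abs_div, abs_of_nonneg, hw0, hv0, ← Finset.sum_div, hw1, hv1]
    norm_num
  · rw [e.sum_comp fun x =>
      t x • Matrix.of (fun i j => if p x i = j then (1 : ℝ) else 0)]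
    ext i j
    have h1 : ∑ σ, w σ * (if σ i = j then (1 : ℝ) else 0) = |M i j| + M i j + C i j := by
      simpa [Matrix.sum_apply, PEquiv.toMatrix_apply, Equiv.toPEquiv_apply]
        using congrArg (fun A => A i j) hw
    have h2 : ∑ σ, v σ * (if σ i = j then (1 : ℝ) else 0) = |M i j| - M i j + C i j := by
      simpa [Matrix.sum_apply, PEquiv.toMatrix_apply, Equiv.toPEquiv_apply]
        using congrArg (fun A => A i j) hv
    simp only [Matrix.sum_apply, Matrix.smul_apply, Matrix.of_apply, Fintype.sum_sum_type,
      t, p, Sum.elim_inl, Sum.elim_inr, id, smul_eq_mul, neg_mul, div_mul_eq_mul_div,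
      Finset.sum_neg_distrib, ← Finset.sum_div]
    change M i j = (∑ σ, w σ * (if σ i = j then (1 : ℝ) else 0)) / 2 +
      -((∑ σ, v σ * (if σ i = j then (1 : ℝ) else 0)) / 2)
    rw [h1, h2]
    ring
end

section
/- Let A = [a(i,j)] be an N×N real matrix with Σ_{j=1}^N |a(i,j)| ≤ 1 for every row i and Σ_{i=1}^N |a(i,j)| ≤ 1 for every column j, and let d, e ∈ ℝ^N be vectors with A d = e and Σ_{i=1}^N d(i) = Σ_{i=1}^N e(i) = 0. Then there exists an N×N real matrix A'' = [a''(i,j)] such that every row sum and every column sum of A'' equals 0, A'' d = e, and Σ_{j=1}^N |a''(i,j)| ≤ 4 for every row i and Σ_{i=1}^N |a''(i,j)| ≤ 4 for every column j. -/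
/-!
Let `J` be the averaging matrix, all of whose entries are `1 / N`. The matrix
`A'' = (1 - J) * A * (1 - J)` has zero row and column sums because `1 - J` kills constant vectors
on either side. Since `d` and `e` have zero sum, `J` kills both, so `A'' d = (1 - J) A d = e`.
Expanding the product gives `A'' = A - A J - J A + J A J`, and each of the four terms has absolute
row and column sums at most `1`, which yields the bound `4`.

Double centering commutes with transposition (`doubleCenter_transpose`), so every claim about
columns follows from the one about rows.
-/

/-- The doubly centered matrix `(1 - J) * A * (1 - J)`, where all entries of `J` are `1 / N`,
written out entrywise. -/
noncomputable def doubleCenter {N : ℕ} (A : Matrix (Fin N) (Fin N) ℝ) :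
    Matrix (Fin N) (Fin N) ℝ :=
  fun i j => A i j - (∑ l, A i l) / N - (∑ k, A k j) / N + (∑ k, ∑ l, A k l) / N / N

theorem doubleCenter_transpose {N : ℕ} (A : Matrix (Fin N) (Fin N) ℝ) (i j : Fin N) :
    doubleCenter A.transpose i j = doubleCenter A j i := by
  simp only [doubleCenter, Matrix.transpose_apply]
  rw [Finset.sum_comm (f := fun k l => A l k)]
  ring

theorem doubleCenter_row_sum {N : ℕ} (A : Matrix (Fin N) (Fin N) ℝ) (i : Fin N) :
    ∑ j, doubleCenter A i j = 0 := by
  have hN : (N : ℝ) ≠ 0 := by exact_mod_cast (Fin.pos i).ne'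
  simp only [doubleCenter, Finset.sum_add_distrib, Finset.sum_sub_distrib, ← Finset.sum_div]
  rw [Finset.sum_comm (f := fun j k => A k j)]
  simp only [Finset.sum_const, Finset.card_univ, Fintype.card_fin, nsmul_eq_mul]
  field_simp
  ring

theorem doubleCenter_abs_row_sum {N : ℕ} (A : Matrix (Fin N) (Fin N) ℝ)
    (hrow : ∀ i, ∑ j, |A i j| ≤ 1) (i : Fin N) :
    ∑ j, |doubleCenter A i j| ≤ 4 := by
  have hN : (0 : ℝ) < N := by exact_mod_cast Fin.pos i
  have hr : ∀ k, |∑ l, A k l| ≤ 1 := fun k =>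
    (Finset.abs_sum_le_sum_abs _ _).trans (hrow k)
  have hs : |∑ k, ∑ l, A k l| ≤ N := by
    refine (Finset.abs_sum_le_sum_abs _ _).trans ((Finset.sum_le_sum fun k _ => hr k).trans ?_)
    simp
  have hc : ∑ j, |∑ k, A k j| ≤ N := by
    calc ∑ j, |∑ k, A k j| ≤ ∑ j, ∑ k, |A k j| :=
          Finset.sum_le_sum fun j _ => Finset.abs_sum_le_sum_abs _ _
      _ = ∑ k, ∑ j, |A k j| := Finset.sum_comm
      _ ≤ ∑ k : Fin N, (1 : ℝ) := Finset.sum_le_sum fun k _ => hrow k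
      _ = N := by simp
  have hentry : ∀ j, |doubleCenter A i j| ≤ |A i j| + 1 / N + |∑ k, A k j| / N + 1 / N := by
    intro j
    have h1 : |(∑ l, A i l) / (N : ℝ)| ≤ 1 / N := by
      rw [abs_div, abs_of_pos hN]
      gcongr
      exact hr i
    have h2 : |(∑ k, ∑ l, A k l) / (N : ℝ) / N| ≤ 1 / N := by
      rw [abs_div, abs_div, abs_of_pos hN]
      gcongr
      exact (div_le_one hN).2 hs
    have h3 : |(∑ k, A k j) / (N : ℝ)| = |∑ k, A k j| / N := by
      rw [abs_div, abs_of_pos hN]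
    rw [← h3]
    unfold doubleCenter
    refine (abs_add_le _ _).trans (add_le_add ?_ h2)
    refine (abs_sub _ _).trans (add_le_add ?_ le_rfl)
    exact (abs_sub _ _).trans (add_le_add le_rfl h1)
  refine (Finset.sum_le_sum fun j _ => hentry j).trans ?_
  simp only [Finset.sum_add_distrib, ← Finset.sum_div, Finset.sum_const, Finset.card_univ,
    Fintype.card_fin, nsmul_eq_mul]
  have h4 : (N : ℝ) * 1 / N = 1 := by field_simp
  have h5 : (∑ j, |∑ k, A k j|) / (N : ℝ) ≤ 1 := (div_le_one hN).2 hc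
  linarith [hrow i]

/-- Double centering does not change the action on a zero-sum vector whose image also has zero
sum. -/
theorem doubleCenter_mulVec {N : ℕ} (A : Matrix (Fin N) (Fin N) ℝ) (d : Fin N → ℝ)
    (hd : ∑ i, d i = 0) (he : ∑ i, A.mulVec d i = 0) :
    (doubleCenter A).mulVec d = A.mulVec d := by
  have hc : ∑ j, (∑ k, A k j) * d j = 0 := by
    rw [← he]
    simp only [Matrix.mulVec, dotProduct, Finset.sum_mul]
    exact Finset.sum_comm
  ext i
  simp only [Matrix.mulVec, dotProduct, doubleCenter, add_mul, sub_mul, Finset.sum_add_distrib,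
    Finset.sum_sub_distrib, ← Finset.mul_sum, hd]
  have h : ∑ j, (∑ k, A k j) / (N : ℝ) * d j = 0 := by
    simp only [div_mul_eq_mul_div, ← Finset.sum_div, hc, zero_div]
  rw [h]
  ring


/-- **Matrix adjustment step in Proposition 1.**  If `A` has all absolute row and column sums
at most `1` and `A d = e` with `∑ d i = ∑ e i = 0`, then `A` can be replaced by a matrix `A''`
with all row and column sums equal to `0`, absolute row and column sums at most `4`,
still satisfying `A'' d = e`. -/
theorem matrix_row_col_sum_zero_adjustment (N : ℕ)
    (A : Matrix (Fin N) (Fin N) ℝ)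
    (habsrow : ∀ i, ∑ j, |A i j| ≤ 1)
    (habscol : ∀ j, ∑ i, |A i j| ≤ 1)
    (d e : Fin N → ℝ)
    (hAd : A.mulVec d = e)
    (hd : ∑ i, d i = 0)
    (he : ∑ i, e i = 0) :
    ∃ A'' : Matrix (Fin N) (Fin N) ℝ,
      (∀ i, ∑ j, A'' i j = 0) ∧
      (∀ j, ∑ i, A'' i j = 0) ∧
      A''.mulVec d = e ∧
      (∀ i, ∑ j, |A'' i j| ≤ 4) ∧
      (∀ j, ∑ i, |A'' i j| ≤ 4) := by
  subst hAd
  refine ⟨doubleCenter A, doubleCenter_row_sum A, fun j => ?_, doubleCenter_mulVec A d hd he,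
    doubleCenter_abs_row_sum A habsrow, fun j => ?_⟩
  · simpa only [doubleCenter_transpose] using doubleCenter_row_sum A.transpose j
  · simpa only [doubleCenter_transpose] using doubleCenter_abs_row_sum A.transpose habscol j
end
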